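/- arXiv:1509.03452 — 4 statements merged into one kernel-verified Lean document; each statement's English description precedes it below -/
import Mathlib

section
/- Let E and F be complex Banach spaces, U ⊆ E an open set, and f : E → F a map that is continuous on U. Let Λ be a set of continuous complex-linear functionals on F (elements of F →L[ℂ] ℂ) that separates the points of F, i.e. for every x ∈ F with x ≠ 0 there exists λ ∈ Λ with λ x ≠ 0. If for every λ ∈ Λ the composite λ ∘ f is complex analytic on U, then f itself is complex analytic on U. -/
open Set Filter Topology Metric

/-- One complex variable: weakly holomorphic and continuous implies holomorphic. -/
theorem aux_one_var {F : Type*} [NormedAddCommGroup F] [NormedSpace ℂ F] [CompleteSpace F]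
    (Λ : Set (F →L[ℂ] ℂ)) (hsep : ∀ x : F, x ≠ 0 → ∃ l ∈ Λ, l x ≠ 0)
    {V : Set ℂ} (hV : IsOpen V) (g : ℂ → F) (hg : ContinuousOn g V)
    (hd : ∀ l ∈ Λ, DifferentiableOn ℂ (fun t => l (g t)) V) :
    DifferentiableOn ℂ g V := by
  intro c hc
  obtain ⟨R, hR, hRV⟩ := nhds_basis_closedBall.mem_iff.1 (hV.mem_nhds hc)
  lift R to NNReal using hR.le
  have hgR : ContinuousOn g (closedBall c R) := hg.mono hRV
  have hci : CircleIntegrable g c R := (hgR.mono sphere_subset_closedBall).circleIntegrable R.2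
  have hps := hasFPowerSeriesOn_cauchy_integral hci (by exact_mod_cast hR)
  have hda := hps.analyticAt.differentiableAt
  refine (hda.congr_of_eventuallyEq ?_).differentiableWithinAt
  filter_upwards [ball_mem_nhds c hR] with w hw
  by_contra hne
  obtain ⟨l, hl, hl0⟩ := hsep _ (sub_ne_zero.2 hne)
  apply hl0
  have h1 := (DifferentiableOn.mono (hd l hl) hRV).diffContOnCl_ball (Subset.refl _)
    |>.two_pi_i_inv_smul_circleIntegral_sub_inv_smul hw
  rw [map_sub, map_smul, sub_eq_zero, ← h1]
  congr 1
  have hint : CircleIntegrable (fun z => (z - w)⁻¹ • g z) c R := by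
    apply ContinuousOn.circleIntegrable R.2
    apply ContinuousOn.smul _ (hgR.mono sphere_subset_closedBall)
    apply ContinuousOn.inv₀ (by fun_prop)
    intro z hz h
    rw [sub_eq_zero.1 h] at hz
    exact (ne_of_lt (mem_ball.1 hw)) hz
  unfold circleIntegral
  rw [← l.intervalIntegral_comp_comm hint.out]
  simp

theorem aux_diff {E F : Type*} [NormedAddCommGroup E] [NormedSpace ℂ E]
    [NormedAddCommGroup F] [NormedSpace ℂ F] [CompleteSpace F]
    {U : Set E} (hU : IsOpen U) (f : E → F) (hf : ContinuousOn f U)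
    (Λ : Set (F →L[ℂ] ℂ))
    (hsep : ∀ x : F, x ≠ 0 → ∃ l ∈ Λ, l x ≠ 0)
    (hana : ∀ l ∈ Λ, DifferentiableOn ℂ (fun x => l (f x)) U) :
    DifferentiableOn ℂ f U := by
  intro y hy
  have hfy : ∀ᶠ z in 𝓝 y, z ∈ U ∧ f z ∈ closedBall (f y) 1 :=
    Filter.Eventually.and (hU.mem_nhds hy)
      ((hf.continuousAt (hU.mem_nhds hy)).eventually (closedBall_mem_nhds _ one_pos))
  obtain ⟨R, hR, hRU⟩ := nhds_basis_ball.mem_iff.1 hfy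
  -- one variable slices
  have hline : ∀ h : E, h ≠ 0 → ∀ t ∈ ball (0:ℂ) (R / ‖h‖), y + t • h ∈ ball y R := by
    intro h hh t ht
    have : 0 < ‖h‖ := norm_pos_iff.2 hh
    simp only [mem_ball, dist_zero_right, lt_div_iff₀ this] at ht
    simpa [norm_smul] using ht
  have hslice : ∀ h : E, h ≠ 0 →
      DifferentiableOn ℂ (fun t : ℂ => f (y + t • h)) (ball 0 (R / ‖h‖)) := by
    intro h hh
    have hm : MapsTo (fun t : ℂ => y + t • h) (ball 0 (R / ‖h‖)) U :=
      fun t ht => (hRU (hline h hh t ht)).1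
    refine aux_one_var Λ hsep isOpen_ball _ (hf.comp (by fun_prop) hm) ?_
    intro l hl
    exact (hana l hl).comp (t := U) (f := fun t : ℂ => y + t • h) (by fun_prop) hm
  have hpos : ∀ h : E, h ≠ 0 → 0 < R / ‖h‖ := fun h hh => div_pos hR (norm_pos_iff.2 hh)
  have hAt : ∀ h : E, DifferentiableAt ℂ (fun t : ℂ => f (y + t • h)) 0 := by
    intro h
    by_cases hh : h = 0
    · simp [hh]
    · exact (hslice h hh).differentiableAt (ball_mem_nhds _ (hpos h hh))
  set A : E → F := fun h => deriv (fun t : ℂ => f (y + t • h)) 0 with hA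
  have hlA : ∀ l ∈ Λ, ∀ h, l (A h) = fderiv ℂ (fun x => l (f x)) y h := by
    intro l hl h
    have h1 : HasDerivAt (fun t : ℂ => l (f (y + t • h))) (l (A h)) 0 :=
      l.hasFDerivAt.comp_hasDerivAt (0:ℂ) (hAt h).hasDerivAt
    have h2 : HasFDerivAt (fun x => l (f x)) (fderiv ℂ (fun x => l (f x)) y) (y + (0:ℂ) • h) := by
      simpa using ((hana l hl).differentiableAt (hU.mem_nhds hy)).hasFDerivAt
    have h3 : HasDerivAt (fun t : ℂ => y + t • h) h 0 := by
      simpa using ((hasDerivAt_id (0:ℂ)).smul_const h).const_add y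
    have h4 := h2.comp_hasDerivAt (0:ℂ) h3
    exact h1.unique h4
  have hext : ∀ a b : F, (∀ l ∈ Λ, l a = l b) → a = b := by
    intro a b hab
    by_contra hne
    obtain ⟨l, hl, hl0⟩ := hsep _ (sub_ne_zero.2 hne)
    exact hl0 (by rw [map_sub, hab l hl, sub_self])
  have hA0 : A 0 = 0 := hext _ _ fun l hl => by rw [hlA l hl]; simp
  have hAb : ∀ h, ‖A h‖ ≤ 1 / R * ‖h‖ := by
    intro h
    by_cases hh : h = 0
    · simp [hh, hA0]
    · have := Complex.norm_deriv_le_div_of_mapsTo_ball (R₂ := 1) (hslice h hh) (fun t ht => by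
        simpa using (hRU (hline h hh t ht)).2) (hpos h hh)
      calc ‖A h‖ ≤ 1 / (R / ‖h‖) := this
        _ = 1 / R * ‖h‖ := by field_simp
  let L : E →L[ℂ] F := LinearMap.mkContinuous
    { toFun := A
      map_add' := fun a b => hext _ _ fun l hl => by simp [hlA l hl]
      map_smul' := fun a b => hext _ _ fun l hl => by simp [hlA l hl] } (1 / R) hAb
  have hL : ∀ h, L h = A h := fun h => rfl
  have hmain : ∀ h : E, ‖h‖ < R → ‖f (y + h) - f y - L h‖ ≤ 2 / R ^ 2 * ‖h‖ ^ 2 := by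
    intro h hhR
    by_cases hh : h = 0
    · simp [hh]
    have hn : 0 < ‖h‖ := norm_pos_iff.2 hh
    have hd : DifferentiableOn ℂ (fun t : ℂ => f (y + t • h) - t • A h) (ball 0 (R / ‖h‖)) :=
      (hslice h hh).sub (by fun_prop)
    have := Complex.dist_le_mul_div_pow_of_mapsTo_ball_of_isLittleO (n := 1) (R₂ := 2) (z := 1)
      hd ?_ ?_ ?_
    · simp only [one_smul, zero_smul, add_zero, sub_zero, dist_eq_norm, norm_one] at this
      rw [hL]
      calc ‖f (y + h) - f y - A h‖ = ‖f (y + h) - A h - f y‖ := by congr 1; abel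
        _ ≤ _ := this
        _ = _ := by rw [one_div_div, div_pow]; norm_num; ring
    · intro t ht
      have h1 : ‖f (y + t • h) - f y‖ ≤ 1 := by
        simpa [dist_eq_norm] using (hRU (hline h hh t ht)).2
      have h2 : ‖t • A h‖ ≤ 1 := by
        rw [norm_smul]
        have ht' : ‖t‖ * ‖h‖ ≤ R := by
          have := (mem_ball_zero_iff.1 ht).le
          rwa [le_div_iff₀ hn] at this
        calc ‖t‖ * ‖A h‖ ≤ ‖t‖ * (1 / R * ‖h‖) := by gcongr; exact hAb h
          _ = (‖t‖ * ‖h‖) / R := by ring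
          _ ≤ 1 := (div_le_one hR).2 ht'
      simp only [zero_smul, add_zero, sub_zero, mem_closedBall, dist_eq_norm]
      calc ‖f (y + t • h) - t • A h - f y‖ = ‖(f (y + t • h) - f y) - t • A h‖ := by
            congr 1; abel
        _ ≤ 1 + 1 := (norm_sub_le _ _).trans (add_le_add h1 h2)
        _ = 2 := by norm_num
    · have := (hasDerivAt_iff_isLittleO.1 (hAt h).hasDerivAt).norm_right
      refine this.congr (fun t => ?_) (fun t => by simp)
      simp [hA]; abel
    · simpa [lt_div_iff₀ hn] using hhR
  have : HasFDerivAt f L y := by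
    rw [hasFDerivAt_iff_isLittleO_nhds_zero]
    have hO : (fun h : E => f (y + h) - f y - L h) =O[𝓝 0] fun h => ‖h‖ ^ 2 := by
      refine Asymptotics.IsBigO.of_bound (2 / R ^ 2) ?_
      filter_upwards [ball_mem_nhds (0:E) hR] with h hh
      simpa using hmain h (by simpa using hh)
    refine hO.trans_isLittleO ?_
    exact Asymptotics.isLittleO_norm_pow_id one_lt_two
  exact this.differentiableAt.differentiableWithinAt

theorem aux_cont_fderiv {E F : Type*} [NormedAddCommGroup E] [NormedSpace ℂ E]
    [NormedAddCommGroup F] [NormedSpace ℂ F]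
    {U : Set E} (hU : IsOpen U) (f : E → F) (hf : DifferentiableOn ℂ f U) :
    ContinuousOn (fderiv ℂ f) U := by
  intro y hy
  apply ContinuousAt.continuousWithinAt
  have hfy : ∀ᶠ z in 𝓝 y, z ∈ U ∧ f z ∈ closedBall (f y) 1 :=
    Filter.Eventually.and (hU.mem_nhds hy)
      ((hf.continuousOn.continuousAt (hU.mem_nhds hy)).eventually
        (closedBall_mem_nhds _ one_pos))
  obtain ⟨R, hR, hRU⟩ := nhds_basis_ball.mem_iff.1 hfy
  have key : ∀ z ∈ ball y (R / 4), ‖fderiv ℂ f z - fderiv ℂ f y‖ ≤ 32 / R ^ 2 * ‖z - y‖ := by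
    intro z hz
    rw [mem_ball, dist_eq_norm] at hz
    have hlip : ∀ w ∈ ball y (R / 4), ‖f (w + (z - y)) - f w‖ ≤ 2 / (R / 2) * ‖z - y‖ := by
      intro w hw
      rw [mem_ball] at hw
      have hsub : ball w (R / 2) ⊆ ball y R := ball_subset_ball' (by linarith)
      have := Complex.dist_le_div_mul_dist_of_mapsTo_ball (f := f) (c := w) (z := w + (z - y))
        (R₁ := R / 2) (R₂ := 2)
        (hf.mono fun v hv => (hRU (hsub hv)).1) (fun v hv => by
          have h1 := (hRU (hsub hv)).2
          have h2 := (hRU (hsub (mem_ball_self (by linarith)))).2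
          rw [mem_closedBall] at *
          linarith [dist_triangle_right (f v) (f w) (f y)])
        (by simp only [mem_ball, dist_eq_norm, add_sub_cancel_left]; linarith)
      simpa [dist_eq_norm] using this
    have hmem : ∀ w ∈ ball y (R / 4), w + (z - y) ∈ ball y R := by
      intro w hw
      rw [mem_ball, dist_eq_norm] at *
      calc ‖w + (z - y) - y‖ = ‖(w - y) + (z - y)‖ := by congr 1; abel
        _ ≤ ‖w - y‖ + ‖z - y‖ := norm_add_le _ _
        _ < R := by linarith
    have hsub4 : ball y (R / 4) ⊆ ball y R := ball_subset_ball (by linarith)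
    have hd : DifferentiableOn ℂ (fun w => f (w + (z - y)) - f w) (ball y (R / 4)) := by
      refine DifferentiableOn.sub ?_ (hf.mono fun v hv => (hRU (hsub4 hv)).1)
      exact hf.comp (f := fun w => w + (z - y)) (by fun_prop) fun w hw => (hRU (hmem w hw)).1
    have hy4 : y ∈ ball y (R / 4) := mem_ball_self (by linarith)
    have hb := Complex.norm_fderiv_le_div_of_mapsTo_ball (R₂ := 8 / R * ‖z - y‖) hd
      (fun w hw => by
        rw [mem_closedBall, dist_eq_norm]
        refine (norm_sub_le _ _).trans ((add_le_add (hlip w hw) (hlip y hy4)).trans_eq ?_)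
        field_simp; ring) (by linarith)
    have hzU : z ∈ U := (hRU (hsub4 (by rw [mem_ball, dist_eq_norm]; exact hz))).1
    have he : fderiv ℂ (fun w => f (w + (z - y)) - f w) y = fderiv ℂ f z - fderiv ℂ f y := by
      have hz' : DifferentiableAt ℂ f (y + (z - y)) := by
        simpa using hf.differentiableAt (hU.mem_nhds hzU)
      rw [fderiv_fun_sub ((differentiableAt_comp_add_right _).2 hz')
        (hf.differentiableAt (hU.mem_nhds hy)), fderiv_comp_add_right]
      simp
    rw [he] at hb
    refine hb.trans_eq ?_
    field_simp; ring
  rw [ContinuousAt, tendsto_iff_norm_sub_tendsto_zero]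
  refine squeeze_zero' (Eventually.of_forall fun _ => norm_nonneg _)
    (g := fun z => 32 / R ^ 2 * ‖z - y‖) ?_ ?_
  · filter_upwards [ball_mem_nhds y (show 0 < R / 4 by linarith)] with z hz using key z hz
  · have : Continuous fun z => 32 / R ^ 2 * ‖z - y‖ := by fun_prop
    simpa using this.tendsto y

theorem aux_iter {E F : Type*} [NormedAddCommGroup E] [NormedSpace ℂ E]
    [NormedAddCommGroup F] [NormedSpace ℂ F] [CompleteSpace F]
    {U : Set E} (hU : IsOpen U) (f : E → F) (hf : ContinuousOn f U)
    (Λ : Set (F →L[ℂ] ℂ))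
    (hsep : ∀ x : F, x ≠ 0 → ∃ l ∈ Λ, l x ≠ 0)
    (hana : ∀ l ∈ Λ, AnalyticOnNhd ℂ (fun x => l (f x)) U) (n : ℕ) :
    DifferentiableOn ℂ (iteratedFDeriv ℂ n f) U := by
  have step : ∀ n : ℕ, ContinuousOn (iteratedFDeriv ℂ n f) U →
      (∀ l ∈ Λ, ∀ m : Fin n → E, AnalyticOnNhd ℂ (fun x => l (iteratedFDeriv ℂ n f x m)) U) →
      DifferentiableOn ℂ (iteratedFDeriv ℂ n f) U := by
    intro n hc ha
    refine aux_diff hU _ hc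
      {φ | ∃ l ∈ Λ, ∃ m : Fin n → E, φ = l.comp (ContinuousMultilinearMap.apply ℂ _ F m)} ?_ ?_
    · intro p hp
      obtain ⟨m, hm⟩ : ∃ m, p m ≠ 0 := by
        by_contra! h
        exact hp (by ext m; simpa using h m)
      obtain ⟨l, hl, hl0⟩ := hsep _ hm
      exact ⟨_, ⟨l, hl, m, rfl⟩, by simpa using hl0⟩
    · rintro _ ⟨l, hl, m, rfl⟩
      simpa using (ha l hl m).differentiableOn
  have main : ∀ n : ℕ, ContinuousOn (iteratedFDeriv ℂ n f) U ∧
      (∀ l ∈ Λ, ∀ m : Fin n → E,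
        AnalyticOnNhd ℂ (fun x => l (iteratedFDeriv ℂ n f x m)) U) := by
    intro n
    induction n with
    | zero =>
      refine ⟨?_, fun l hl m => by simpa using hana l hl⟩
      rw [iteratedFDeriv_zero_eq_comp]
      exact (LinearIsometryEquiv.continuous _).comp_continuousOn hf
    | succ n ih =>
      have hd := step n ih.1 ih.2
      refine ⟨?_, fun l hl m => ?_⟩
      · rw [iteratedFDeriv_succ_eq_comp_left]
        exact (LinearIsometryEquiv.continuous _).comp_continuousOn (aux_cont_fderiv hU _ hd)
      · have h1 := (ih.2 l hl (Fin.tail m)).fderiv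
        have h2 : AnalyticOnNhd ℂ
            (fun x => fderiv ℂ (fun x => l (iteratedFDeriv ℂ n f x (Fin.tail m))) x (m 0)) U :=
          (ContinuousLinearMap.apply ℂ ℂ (m 0)).comp_analyticOnNhd h1
        refine h2.congr hU fun x hx => ?_
        have hdx := (hd.differentiableAt (hU.mem_nhds hx)).hasFDerivAt
        have h3 := ((l.comp (ContinuousMultilinearMap.apply ℂ (fun _ : Fin n => E) F
          (Fin.tail m))).hasFDerivAt.comp x hdx).fderiv
        simp only [Function.comp_def, ContinuousLinearMap.comp_apply,
          ContinuousMultilinearMap.apply_apply] at h3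
        rw [h3, iteratedFDeriv_succ_apply_left]
        simp
  exact step n (main n).1 (main n).2

theorem aux_bound {E F : Type*} [NormedAddCommGroup E] [NormedSpace ℂ E]
    [NormedAddCommGroup F] [NormedSpace ℂ F]
    (f : E → F) (x : E) (R M : ℝ)
    (hd : ∀ n, DifferentiableOn ℂ (iteratedFDeriv ℂ n f) (ball x R))
    (hM : ∀ y ∈ ball x R, ‖f y‖ ≤ M) (δ : ℝ) (hδ : 0 < δ) (k : ℕ) :
    ∀ y, dist y x < R → dist y x + k * δ ≤ R → ‖iteratedFDeriv ℂ k f y‖ ≤ M * (2 / δ) ^ k := by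
  induction k with
  | zero => intro y hy _; simpa using hM y hy
  | succ k ih =>
    intro y hy hk
    push_cast at hk
    have hkδ : 0 ≤ k * δ := by positivity
    have hsub : ball y δ ⊆ ball x R := ball_subset_ball' (by linarith)
    have hb : ∀ z ∈ ball y δ, ‖iteratedFDeriv ℂ k f z‖ ≤ M * (2 / δ) ^ k := by
      intro z hz
      refine ih z (hsub hz) ?_
      rw [mem_ball] at hz
      linarith [dist_triangle z y x]
    rw [← norm_fderiv_iteratedFDeriv]
    have := Complex.norm_fderiv_le_div_of_mapsTo_ball (R₂ := 2 * (M * (2 / δ) ^ k))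
      ((hd k).mono hsub) (fun z hz => by
        rw [mem_closedBall, dist_eq_norm]
        refine (norm_sub_le _ _).trans ?_
        linarith [hb z hz, hb y (mem_ball_self hδ)]) hδ
    refine this.trans_eq ?_
    rw [pow_succ]; ring

theorem aux_line {E F : Type*} [NormedAddCommGroup E] [NormedSpace ℂ E]
    [NormedAddCommGroup F] [NormedSpace ℂ F]
    (f : E → F) (x h : E) {V : Set E} (hV : IsOpen V)
    (hd : ∀ n, DifferentiableOn ℂ (iteratedFDeriv ℂ n f) V) (n : ℕ) :
    ∀ t : ℂ, x + t • h ∈ V → iteratedDeriv n (fun t : ℂ => f (x + t • h)) t =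
      iteratedFDeriv ℂ n f (x + t • h) (fun _ => h) := by
  induction n with
  | zero => intro t _; simp
  | succ n ih =>
    intro t ht
    rw [iteratedDeriv_succ]
    have hev : ∀ᶠ s in 𝓝 t, x + s • h ∈ V :=
      (show Continuous fun s : ℂ => x + s • h by fun_prop).continuousAt.eventually
        (hV.mem_nhds ht)
    have he : iteratedDeriv n (fun t : ℂ => f (x + t • h)) =ᶠ[𝓝 t]
        fun t => iteratedFDeriv ℂ n f (x + t • h) (fun _ => h) := hev.mono ih
    rw [he.deriv_eq]
    have h1 := ((hd n).differentiableAt (hV.mem_nhds ht)).hasFDerivAt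
    have h3 : HasDerivAt (fun t : ℂ => x + t • h) h t := by
      simpa using ((hasDerivAt_id t).smul_const h).const_add x
    have h4 := (ContinuousMultilinearMap.apply ℂ (fun _ : Fin n => E) F
      (fun _ => h)).hasFDerivAt.comp_hasDerivAt t (h1.comp_hasDerivAt t h3)
    have h5 := h4.deriv
    simp only [Function.comp_def, ContinuousMultilinearMap.apply_apply] at h5
    rw [h5, iteratedFDeriv_succ_apply_left]
    rfl

theorem analyticOnNhd_of_separating_functionals
    {E F : Type*} [NormedAddCommGroup E] [NormedSpace ℂ E] [CompleteSpace E]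
    [NormedAddCommGroup F] [NormedSpace ℂ F] [CompleteSpace F]
    {U : Set E} (hU : IsOpen U) (f : E → F) (hf : ContinuousOn f U)
    (Λ : Set (F →L[ℂ] ℂ))
    (hsep : ∀ x : F, x ≠ 0 → ∃ l ∈ Λ, l x ≠ 0)
    (hana : ∀ l ∈ Λ, AnalyticOnNhd ℂ (fun x => l (f x)) U) :
    AnalyticOnNhd ℂ f U := by
  intro x hx
  have hit := aux_iter hU f hf Λ hsep hana
  have hfx : ∀ᶠ z in 𝓝 x, z ∈ U ∧ f z ∈ closedBall (f x) 1 :=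
    Filter.Eventually.and (hU.mem_nhds hx)
      ((hf.continuousAt (hU.mem_nhds hx)).eventually (closedBall_mem_nhds _ one_pos))
  obtain ⟨R, hR, hRU⟩ := nhds_basis_ball.mem_iff.1 hfx
  have hdR : ∀ n, DifferentiableOn ℂ (iteratedFDeriv ℂ n f) (ball x R) :=
    fun n => (hit n).mono fun z hz => (hRU hz).1
  set M := ‖f x‖ + 1 with hMdef
  have hM : ∀ y ∈ ball x R, ‖f y‖ ≤ M := fun y hy => by
    have := (hRU hy).2
    rw [mem_closedBall, dist_eq_norm] at this
    linarith [norm_le_norm_add_norm_sub' (f y) (f x)]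
  have hM0 : 0 ≤ M := by positivity
  have hbd : ∀ n : ℕ, ‖iteratedFDeriv ℂ n f x‖ ≤ M * (2 * n / R) ^ n := by
    intro n
    rcases Nat.eq_zero_or_pos n with rfl | hn
    · simpa using hM x (mem_ball_self hR)
    have hn' : (0:ℝ) < n := by exact_mod_cast hn
    have := aux_bound f x R M hdR hM (R / n) (by positivity) n x (by simpa using hR)
      (by rw [dist_self, zero_add]; exact (mul_div_cancel₀ R hn'.ne').le)
    refine this.trans_eq ?_
    congr 2; field_simp
  let p : FormalMultilinearSeries ℂ E F := fun n => (n.factorial : ℂ)⁻¹ • iteratedFDeriv ℂ n f x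
  have hr0 : 0 < R / (2 * Real.exp 1) := by positivity
  set r : NNReal := ⟨R / (2 * Real.exp 1), hr0.le⟩ with hr
  have hrv : (r : ℝ) = R / (2 * Real.exp 1) := rfl
  have hrad : (r : ENNReal) ≤ p.radius := by
    refine p.le_radius_of_bound M fun n => ?_
    have h1 : ‖p n‖ ≤ (n.factorial : ℝ)⁻¹ * (M * (2 * n / R) ^ n) := by
      simp only [p, norm_smul, norm_inv, Complex.norm_natCast]
      gcongr; exact hbd n
    have h2 : (n:ℝ) ^ n / n.factorial ≤ Real.exp 1 ^ n := by
      simpa using Real.pow_div_factorial_le_exp (n:ℝ) (Nat.cast_nonneg n) n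
    calc ‖p n‖ * (r:ℝ) ^ n ≤ (n.factorial : ℝ)⁻¹ * (M * (2 * n / R) ^ n) * (r:ℝ) ^ n := by gcongr
      _ = M * (((n:ℝ) ^ n / n.factorial) / Real.exp 1 ^ n) := by
        rw [hrv]; simp only [div_pow, mul_pow]; field_simp
      _ ≤ M * 1 := by
        gcongr
        exact (div_le_one (by positivity)).2 h2
      _ = M := mul_one M
  refine ⟨p, r, hrad, by exact_mod_cast hr0, fun {h} hh => ?_⟩
  have hh' : ‖h‖ < R / 2 := by
    have h1 : ‖h‖ < r := by
      rw [Metric.eball_coe] at hh; simpa using hh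
    refine h1.trans_le ?_
    rw [hrv]
    gcongr
    linarith [Real.add_one_le_exp 1]
  have hin : ∀ t ∈ ball (0:ℂ) 2, x + t • h ∈ ball x R := by
    intro t ht
    rw [mem_ball_zero_iff] at ht
    simp only [mem_ball, dist_eq_norm, add_sub_cancel_left, norm_smul]
    nlinarith [norm_nonneg h, norm_nonneg t]
  have hfd : DifferentiableOn ℂ f (ball x R) := by
    have := (continuousMultilinearCurryFin0 ℂ E F).differentiable.comp_differentiableOn (hdR 0)
    exact this.congr fun y hy => by simp
  have hg : DifferentiableOn ℂ (fun t : ℂ => f (x + t • h)) (ball 0 2) :=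
    hfd.comp (f := fun t : ℂ => x + t • h) (by fun_prop) hin
  have hs := Complex.hasSum_taylorSeries_on_ball hg (z := 1) (by simp)
  simp only [one_smul, sub_zero, one_pow] at hs
  refine hs.congr_fun ?_ 
  intro n
  rw [aux_line f x h isOpen_ball hdR n 0 (hin 0 (by simp))]
  simp [p]
end

section
/- Let ω, ω' : ℕ → ℝ be weights with ω n > 0 and ω' n > 0 for all n, and suppose ω' n / ω n → 0 as n → ∞. Let (a_j)_{j ∈ ℕ} be a sequence of functions a_j : ℕ → ℝ satisfying |a_j n| · ω n ≤ 1 for all j and n. Then there exists a strictly increasing φ : ℕ → ℕ such that the subsequence (a_{φ(k)}) is uniformly Cauchy for the ω'-weighted supremum norm: for every δ > 0 there is N such that for all k, l ≥ N and all n ∈ ℕ, |a_{φ(k)} n − a_{φ(l)} n| · ω' n ≤ δ. -/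
theorem weighted_inclusion_compact
    (ω ω' : ℕ → ℝ) (hω : ∀ n, 0 < ω n) (hω' : ∀ n, 0 < ω' n)
    (hlim : Filter.Tendsto (fun n => ω' n / ω n) Filter.atTop (nhds 0))
    (a : ℕ → ℕ → ℝ) (hb : ∀ j n, |a j n| * ω n ≤ 1) :
    ∃ φ : ℕ → ℕ, StrictMono φ ∧
      ∀ δ > (0 : ℝ), ∃ N : ℕ, ∀ k l : ℕ, N ≤ k → N ≤ l →
        ∀ n : ℕ, |a (φ k) n - a (φ l) n| * ω' n ≤ δ := by
  have hle : ∀ j n, |a j n| ≤ 1 / ω n := fun j n => (le_div_iff₀ (hω n)).2 (hb j n)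
  have hc : IsCompact (Set.univ.pi fun n => Set.Icc (-(1 / ω n)) (1 / ω n)) :=
    isCompact_univ_pi fun n => isCompact_Icc
  obtain ⟨b, -, φ, hφ, hlimφ⟩ := hc.tendsto_subseq (x := a)
    (fun j n _ => abs_le.1 (hle j n))
  refine ⟨φ, hφ, fun δ hδ => ?_⟩
  have h2 : (0 : ℝ) < δ / 2 := by positivity
  obtain ⟨M, hM⟩ := Filter.eventually_atTop.1 (hlim.eventually (gt_mem_nhds h2))
  have hev : ∀ n, ∀ᶠ k in Filter.atTop, |a (φ k) n - b n| * ω' n < δ / 2 := by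
    intro n
    have h := (((tendsto_pi_nhds.1 hlimφ n).sub_const (b n)).abs).mul_const (ω' n)
    simp only [sub_self, abs_zero, zero_mul] at h
    exact h.eventually (gt_mem_nhds h2)
  have hall : ∀ᶠ k in Filter.atTop, ∀ n ∈ Finset.range M, |a (φ k) n - b n| * ω' n < δ / 2 :=
    (Filter.eventually_all_finset _).2 fun n _ => hev n
  obtain ⟨N, hN⟩ := Filter.eventually_atTop.1 hall
  refine ⟨N, fun k l hk hl n => ?_⟩
  rcases lt_or_ge n M with h | h
  · have h3 := hN k hk n (Finset.mem_range.2 h)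
    have h4 := hN l hl n (Finset.mem_range.2 h)
    have h5 := mul_le_mul_of_nonneg_right (abs_sub_le (a (φ k) n) (b n) (a (φ l) n)) (hω' n).le
    rw [abs_sub_comm (b n)] at h5
    linarith
  · have h3 := hM n h
    have h4 : ∀ j, |a j n| * ω' n ≤ ω' n / ω n := fun j => by
      have := mul_le_mul_of_nonneg_right (hle j n) (hω' n).le
      rwa [one_div_mul_eq_div] at this
    have h5 := mul_le_mul_of_nonneg_right (abs_sub (a (φ k) n) (a (φ l) n)) (hω' n).le
    have h6 := h4 (φ k)
    have h7 := h4 (φ l)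
    linarith
end

section
/- Let ε be a nonzero real number and η : ℕ → ℝ a sequence with η 1 = ε which satisfies, for every natural number n ≥ 2, the linear equations ∑_{k=1}^{n} (n choose (k−1)) · η k · ε^(n−k) = 0. Then for every n ≥ 1, η n = ε^n · B_{n−1}, where B_m denotes the m-th Bernoulli number. -/
theorem log_euler_bushy_coefficients
    (ε : ℝ) (hε : ε ≠ 0) (η : ℕ → ℝ) (h1 : η 1 = ε)
    (hrec : ∀ n : ℕ, 2 ≤ n →
      ∑ k ∈ Finset.Icc 1 n, (n.choose (k - 1) : ℝ) * η k * ε ^ (n - k) = 0) :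
    ∀ n : ℕ, 1 ≤ n → η n = ε ^ n * (bernoulli (n - 1) : ℝ) := by
  have key : ∀ m : ℕ, η (m + 1) = ε ^ (m + 1) * (bernoulli m : ℝ) := by
    intro m
    induction m using Nat.strong_induction_on with
    | _ m ih =>
      rcases Nat.eq_zero_or_pos m with rfl | hm
      · simp [h1]
      have hr := hrec (m + 1) (by omega)
      have hI : Finset.Icc 1 (m + 1) = Finset.Ico 1 (m + 2) := by
        ext x; simp only [Finset.mem_Icc, Finset.mem_Ico]; omega
      rw [hI, Finset.sum_Ico_eq_sum_range, show m + 2 - 1 = m + 1 from rfl,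
        Finset.sum_range_succ] at hr
      have hb : (∑ k ∈ Finset.range (m + 1), ((m + 1).choose k : ℝ) * (bernoulli k : ℝ)) = 0 := by
        have := sum_bernoulli (m + 1)
        rw [if_neg (by omega)] at this
        exact_mod_cast congrArg (fun q : ℚ => (q : ℝ)) this
      rw [Finset.sum_range_succ] at hb
      have hs : ∑ k ∈ Finset.range m,
          ((m + 1).choose (1 + k - 1) : ℝ) * η (1 + k) * ε ^ (m + 1 - (1 + k))
          = ε ^ (m + 1) *
            ∑ k ∈ Finset.range m, ((m + 1).choose k : ℝ) * (bernoulli k : ℝ) := by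
        rw [Finset.mul_sum]
        refine Finset.sum_congr rfl fun k hk => ?_
        have hk' := Finset.mem_range.mp hk
        have e : ε ^ (m + 1) = ε ^ (k + 1) * ε ^ (m + 1 - (1 + k)) := by
          rw [← pow_add]; congr 1; omega
        rw [add_comm 1 k, ih k hk', add_comm k 1] at *
        rw [e, Nat.add_sub_cancel_left, add_comm 1 k]
        ring
      rw [hs] at hr
      have hc : ((m + 1).choose m : ℝ) ≠ 0 := by
        rw [Nat.choose_succ_self_right]; positivity
      rw [Nat.add_sub_cancel_left, add_comm 1 m, Nat.sub_self, pow_zero, mul_one] at hr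
      apply mul_left_cancel₀ hc
      linear_combination hr - ε ^ (m + 1) * hb
  intro n hn
  obtain ⟨m, rfl⟩ := Nat.exists_eq_add_of_le' hn
  simpa using key m
end

section
/- Let ε be a nonzero real number, η : ℕ → ℝ, and γ : ℝ → ℕ → ℝ. Suppose: (i) γ 0 n = 0 for all n ≥ 1; (ii) for every n ≥ 1 and every t ∈ [0,1], the function t ↦ γ t n has derivative ∑_{k=1}^{n} ((n−1) choose (k−1)) · η k · (ε·t)^(n−k) at t; (iii) γ 1 1 = ε; and (iv) γ 1 n = 0 for all n ≥ 2. Then for every n ≥ 1, η n = ε^n · B_{n−1}, where B_m denotes the m-th Bernoulli number. -/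
theorem exp_evolution_bushy_coefficients
    (ε : ℝ) (hε : ε ≠ 0) (η : ℕ → ℝ) (γ : ℝ → ℕ → ℝ)
    (hinit : ∀ n : ℕ, 1 ≤ n → γ 0 n = 0)
    (hderiv : ∀ n : ℕ, 1 ≤ n → ∀ t ∈ Set.Icc (0 : ℝ) 1,
      HasDerivAt (fun t => γ t n)
        (∑ k ∈ Finset.Icc 1 n, ((n - 1).choose (k - 1) : ℝ) * η k * (ε * t) ^ (n - k)) t)
    (hone : γ 1 1 = ε)
    (hzero : ∀ n : ℕ, 2 ≤ n → γ 1 n = 0) :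
    ∀ n : ℕ, 1 ≤ n → η n = ε ^ n * (bernoulli (n - 1) : ℝ) := by
  have key : ∀ m : ℕ, γ 1 (m + 1) = ∑ j ∈ Finset.range (m + 1),
      ((m + 1).choose j : ℝ) / (m + 1) * η (j + 1) * ε ^ (m - j) := by
    intro m
    have hd : ∀ t ∈ Set.uIcc (0 : ℝ) 1, HasDerivAt (fun t => γ t (m + 1))
        (∑ j ∈ Finset.range (m + 1), (m.choose j : ℝ) * η (j + 1) * (ε * t) ^ (m - j)) t := by
      intro t ht
      rw [Set.uIcc_of_le zero_le_one] at ht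
      have h := hderiv (m + 1) (by omega) t ht
      rw [← Finset.Ico_add_one_right_eq_Icc, Finset.sum_Ico_eq_sum_range] at h
      convert h using 1
      refine Finset.sum_congr (by simp) fun j hj => ?_
      have e1 : m + 1 - (1 + j) = m - j := by omega
      have e2 : 1 + j - 1 = j := by omega
      rw [e1, e2, add_comm 1 j, Nat.add_sub_cancel]
    have hI := intervalIntegral.integral_eq_sub_of_hasDerivAt hd
      (Continuous.intervalIntegrable (by fun_prop) _ _)
    rw [hinit (m + 1) (by omega), sub_zero] at hI
    rw [← hI, intervalIntegral.integral_finsetSum]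
    · refine Finset.sum_congr rfl fun j hj => ?_
      have hj' : j ≤ m := by simpa [Nat.lt_succ_iff] using hj
      simp only [mul_pow]
      rw [intervalIntegral.integral_const_mul, intervalIntegral.integral_const_mul, integral_pow]
      have hc : ((m + 1).choose j : ℝ) * ((m - j : ℕ) + 1) = (m.choose j : ℝ) * (m + 1) := by
        have := Nat.choose_mul_succ_eq m j
        have e : m + 1 - j = (m - j) + 1 := by omega
        rw [e] at this
        exact_mod_cast this.symm
      have h1 : ((m : ℝ) + 1) ≠ 0 := by positivity
      have h2 : (((m - j : ℕ) : ℝ) + 1) ≠ 0 := by positivity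
      have hc2 : ((m + 1).choose j : ℝ) / (m + 1) = m.choose j / ((m - j : ℕ) + 1) := by
        rw [div_eq_div_iff h1 h2, hc]
      rw [hc2]
      simp
      ring
    · intro j hj
      exact Continuous.intervalIntegrable (by fun_prop) _ _
  have main : ∀ m : ℕ, η (m + 1) = ε ^ (m + 1) * (bernoulli m : ℝ) := by
    intro m
    induction m using Nat.strong_induction_on with
    | _ m ih =>
      have h1 : ((m : ℝ) + 1) ≠ 0 := by positivity
      have hB : ∑ j ∈ Finset.range (m + 1), ((m + 1).choose j : ℝ) * (bernoulli j : ℝ)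
          = if m + 1 = 1 then 1 else 0 := by
        have := sum_bernoulli (m + 1)
        have h2 := congrArg (fun q : ℚ => (q : ℝ)) this
        simp only [Rat.cast_sum, Rat.cast_mul, Rat.cast_natCast] at h2
        rw [h2]
        split_ifs <;> simp
      have hg : γ 1 (m + 1) = ε ^ (m + 1) / (m + 1) * (if m + 1 = 1 then 1 else 0) := by
        rcases Nat.eq_zero_or_pos m with h | h
        · subst h; simp [hone]
        · rw [hzero _ (by omega), if_neg (by omega), mul_zero]
      rw [key m, ← hB, Finset.mul_sum, Finset.sum_range_succ, Finset.sum_range_succ] at hg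
      have hs : ∑ j ∈ Finset.range m, ((m + 1).choose j : ℝ) / (m + 1) * η (j + 1) * ε ^ (m - j)
          = ∑ j ∈ Finset.range m,
            ε ^ (m + 1) / (m + 1) * (((m + 1).choose j : ℝ) * (bernoulli j : ℝ)) := by
        refine Finset.sum_congr rfl fun j hj => ?_
        have hj' := Finset.mem_range.1 hj
        have e : m + 1 = (j + 1) + (m - j) := by omega
        rw [ih j hj']
        have e2 : ε ^ (m + 1) = ε ^ (j + 1) * ε ^ (m - j) := by rw [← pow_add, ← e]
        rw [e2]
        ring
      rw [hs] at hg
      have hg' := add_left_cancel hg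
      rw [Nat.choose_succ_self_right] at hg'
      push_cast at hg'
      rw [div_self h1, Nat.sub_self, pow_zero, one_mul, mul_one] at hg'
      rw [hg']
      field_simp
  intro n hn
  obtain ⟨m, rfl⟩ : ∃ m, n = m + 1 := ⟨n - 1, by omega⟩
  simpa using main m
end
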